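/- For every b ∈ (0,1) and every ε ∈ (0,1/2) there exist constants C > 0 and κ₀ > 0 such that for all κ ∈ (0, κ₀) and all real z: | log( (−e^{−κz}; e^{−κ})_∞ ) − π²/(12κ) + (z − 1/2)·log 2 | ≤ C·( κ(1+|z|)² + κ^b (1+|z|)^{1+2b+ε} ). -/

import Mathlib

open Filter

/-- Infinite q-Pochhammer symbol `(a;q)_∞ = ∏_{k=0}^∞ (1 - a q^k)` for real `a, q`. -/
noncomputable def qPochInfR (a q : ℝ) : ℝ := ∏' k : ℕ, (1 - a * q ^ k)

open MeasureTheory Set Topology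

/-- The function `log (1 + e^{-x})`. -/
noncomputable def auxF (x : ℝ) : ℝ := Real.log (1 + Real.exp (-x))

/-- Minus the derivative of `auxF`. -/
noncomputable def auxG (x : ℝ) : ℝ := Real.exp (-x) / (1 + Real.exp (-x))

/-- The primitive of `auxF`. -/
noncomputable def auxP (x : ℝ) : ℝ := ∫ t in (0 : ℝ)..x, auxF t

lemma auxF_deriv (x : ℝ) : HasDerivAt auxF (-auxG x) x := by
  have h1 : HasDerivAt (fun x : ℝ => 1 + Real.exp (-x)) (Real.exp (-x) * (-1)) x :=
    ((hasDerivAt_neg x).exp).const_add 1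
  have h2 := h1.log (by positivity)
  unfold auxF auxG
  convert h2 using 1
  ring

lemma auxF_cont : Continuous auxF :=
  continuous_iff_continuousAt.2 fun x => (auxF_deriv x).continuousAt

lemma auxP_deriv (x : ℝ) : HasDerivAt auxP (auxF x) x :=
  intervalIntegral.integral_hasDerivAt_right (auxF_cont.intervalIntegrable _ _)
    (auxF_cont.stronglyMeasurableAtFilter _ _) auxF_cont.continuousAt

lemma auxG_pos (x : ℝ) : 0 < auxG x := by unfold auxG; positivity

lemma auxG_le_one (x : ℝ) : auxG x ≤ 1 := by
  unfold auxG
  rw [div_le_one (by positivity)]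
  linarith

lemma auxG_anti {x y : ℝ} (h : x ≤ y) : auxG y ≤ auxG x := by
  unfold auxG
  have : Real.exp (-y) ≤ Real.exp (-x) := Real.exp_le_exp.2 (by linarith)
  rw [div_le_div_iff₀ (by positivity) (by positivity)]
  nlinarith

lemma auxF_bounds {x t : ℝ} (h : x ≤ t) :
    (t - x) * auxG t ≤ auxF x - auxF t ∧ auxF x - auxF t ≤ (t - x) * auxG x := by
  rcases h.eq_or_lt with rfl | h
  · simp
  obtain ⟨c, hc, he⟩ := exists_hasDerivAt_eq_slope auxF (fun x => -auxG x) h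
    auxF_cont.continuousOn (fun x _ => auxF_deriv x)
  have h0 : 0 < t - x := by linarith
  rw [eq_div_iff h0.ne'] at he
  have h1 := auxG_anti hc.1.le
  have h2 := auxG_anti hc.2.le
  constructor <;> nlinarith

lemma auxP_upper {x h : ℝ} (hh : 0 ≤ h) :
    auxP (x + h) - auxP x ≤ h * auxF x - h ^ 2 / 2 * auxG (x + h) := by
  have hm : MonotoneOn (fun t => auxF x * t - (t - x) ^ 2 / 2 * auxG (x + h) - auxP t)
      (Icc x (x + h)) := by
    have hd : ∀ t, HasDerivAt (fun t => auxF x * t - (t - x) ^ 2 / 2 * auxG (x + h) - auxP t)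
        (auxF x - (t - x) * auxG (x + h) - auxF t) t := by
      intro t
      have h1 : HasDerivAt (fun t : ℝ => t - x) 1 t := (hasDerivAt_id t).sub_const x
      have := ((((hasDerivAt_id t).const_mul (auxF x)).sub
        (((h1.pow 2).div_const 2).mul_const (auxG (x + h)))).sub (auxP_deriv t))
      refine this.congr_deriv ?_
      simp
    apply monotoneOn_of_deriv_nonneg (convex_Icc _ _)
    · exact fun t _ => (hd t).continuousAt.continuousWithinAt
    · exact fun t _ => (hd t).differentiableAt.differentiableWithinAt
    · intro t ht
      rw [interior_Icc] at ht
      rw [(hd t).deriv]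
      have h1 := (auxF_bounds ht.1.le).1
      have h2 := auxG_anti ht.2.le
      nlinarith [ht.1]
  have := hm (left_mem_Icc.2 (by linarith)) (right_mem_Icc.2 (by linarith)) (by linarith)
  simp only at this
  ring_nf at this ⊢
  linarith

lemma auxP_lower {x h : ℝ} (hh : 0 ≤ h) :
    h * auxF x - h ^ 2 / 2 * auxG x ≤ auxP (x + h) - auxP x := by
  have hm : MonotoneOn (fun t => auxP t - (auxF x * t - (t - x) ^ 2 / 2 * auxG x))
      (Icc x (x + h)) := by
    have hd : ∀ t, HasDerivAt (fun t => auxP t - (auxF x * t - (t - x) ^ 2 / 2 * auxG x))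
        (auxF t - (auxF x - (t - x) * auxG x)) t := by
      intro t
      have h1 : HasDerivAt (fun t : ℝ => t - x) 1 t := (hasDerivAt_id t).sub_const x
      have := (auxP_deriv t).sub (((hasDerivAt_id t).const_mul (auxF x)).sub
        (((h1.pow 2).div_const 2).mul_const (auxG x)))
      refine this.congr_deriv ?_
      simp
    apply monotoneOn_of_deriv_nonneg (convex_Icc _ _)
    · exact fun t _ => (hd t).continuousAt.continuousWithinAt
    · exact fun t _ => (hd t).differentiableAt.differentiableWithinAt
    · intro t ht
      rw [interior_Icc] at ht
      rw [(hd t).deriv]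
      have h1 := (auxF_bounds ht.1.le).2
      linarith
  have := hm (left_mem_Icc.2 (by linarith)) (right_mem_Icc.2 (by linarith)) (by linarith)
  simp only at this
  ring_nf at this ⊢
  linarith

lemma aux_step {x h : ℝ} (hh : 0 ≤ h) :
    |h * (auxF x + auxF (x + h)) / 2 - (auxP (x + h) - auxP x)|
      ≤ h ^ 2 * (auxG x - auxG (x + h)) := by
  have h1 := auxP_upper (x := x) hh
  have h2 := auxP_lower (x := x) hh
  obtain ⟨h3, h4⟩ := auxF_bounds (x := x) (t := x + h) (by linarith)
  have h5 := auxG_anti (x := x) (y := x + h) (by linarith)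
  rw [abs_le]
  have e : x + h - x = h := by ring
  rw [e] at h3 h4
  have h6 := mul_le_mul_of_nonneg_left h3 hh
  have h7 := mul_le_mul_of_nonneg_left h4 hh
  have h8 := mul_nonneg (sq_nonneg h) (sub_nonneg.2 h5)
  constructor <;> nlinarith

lemma aux_sum {x h : ℝ} (hh : 0 ≤ h) (N : ℕ) :
    |h * ∑ k ∈ Finset.range N, auxF (x + k * h) - (auxP (x + N * h) - auxP x)
      - h * (auxF x - auxF (x + N * h)) / 2| ≤ h ^ 2 * (auxG x - auxG (x + N * h)) := by
  induction N with
  | zero => simp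
  | succ n ih =>
    have hs := aux_step (x := x + n * h) hh
    have e : x + n * h + h = x + ((n + 1 : ℕ) : ℝ) * h := by push_cast; ring
    rw [e] at hs
    rw [Finset.sum_range_succ]
    rw [abs_le] at *
    constructor <;> nlinarith

lemma auxF_nonneg (x : ℝ) : 0 ≤ auxF x :=
  Real.log_nonneg (by linarith [Real.exp_pos (-x)])

lemma auxF_le (x : ℝ) : auxF x ≤ Real.exp (-x) := by
  unfold auxF
  have := Real.log_le_sub_one_of_pos (x := 1 + Real.exp (-x)) (by positivity)
  linarith

lemma auxF_zero : auxF 0 = Real.log 2 := by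
  unfold auxF; norm_num

lemma auxF_lip (x : ℝ) : |auxF x - Real.log 2| ≤ |x| := by
  rw [← auxF_zero]
  rcases le_total 0 x with h | h
  · obtain ⟨h1, h2⟩ := auxF_bounds h
    have := auxG_le_one 0
    have := auxG_pos x
    rw [abs_of_nonneg h, abs_le]
    constructor <;> nlinarith
  · obtain ⟨h1, h2⟩ := auxF_bounds h
    have := auxG_le_one x
    have := auxG_pos 0
    rw [abs_of_nonpos h, abs_le]
    constructor <;> nlinarith

lemma auxP_lip (x : ℝ) : |auxP x - x * Real.log 2| ≤ x ^ 2 := by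
  have e : auxP x - x * Real.log 2 = ∫ t in (0 : ℝ)..x, (auxF t - Real.log 2) := by
    rw [intervalIntegral.integral_sub (auxF_cont.intervalIntegrable _ _) (by simp)]
    simp [auxP]
  rw [e]
  have := intervalIntegral.norm_integral_le_of_norm_le_const (a := 0) (b := x) (C := |x|)
    (f := fun t => auxF t - Real.log 2) (by
      intro t ht
      refine (auxF_lip t).trans ?_
      rcases le_total 0 x with h | h
      · rw [uIoc_of_le h] at ht
        rw [abs_of_nonneg h, abs_of_nonneg ht.1.le]; exact ht.2
      · rw [uIoc_of_ge h] at ht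
        rw [abs_of_nonpos h, abs_of_nonpos ht.2]; linarith [ht.1])
  rw [sub_zero, ← sq, sq_abs] at this
  exact this

lemma aux_hasSum_congr {f g : ℕ → ℝ} {a : ℝ} (h : ∀ n, f n = g n) : HasSum f a ↔ HasSum g a := by
  rw [funext h]

lemma aux_zeta : HasSum (fun n : ℕ => 1 / ((n : ℝ) + 1) ^ 2) (Real.pi ^ 2 / 6) := by
  have := (hasSum_nat_add_iff' 1).2 hasSum_zeta_two
  simpa using this

lemma aux_odd :
    HasSum (fun n : ℕ => 1 / (((2 * n + 1 : ℕ) : ℝ) + 1) ^ 2) (Real.pi ^ 2 / 24) := by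
  have := aux_zeta.mul_left (1 / 4)
  rw [show (1 : ℝ) / 4 * (Real.pi ^ 2 / 6) = Real.pi ^ 2 / 24 by ring] at this
  refine (aux_hasSum_congr ?_).1 this
  intro n
  push_cast
  have : (n : ℝ) + 1 ≠ 0 := by positivity
  have : (2 : ℝ) * n + 1 + 1 ≠ 0 := by positivity
  field_simp
  ring

lemma aux_even : HasSum (fun n : ℕ => 1 / (((2 * n : ℕ) : ℝ) + 1) ^ 2) (Real.pi ^ 2 / 8) := by
  have hse : Summable (fun n : ℕ => 1 / (((2 * n : ℕ) : ℝ) + 1) ^ 2) :=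
    aux_zeta.summable.comp_injective (i := fun n => 2 * n) (fun a b h => by simpa using h)
  obtain ⟨e, he⟩ := hse
  have htot : HasSum (fun n : ℕ => 1 / ((n : ℝ) + 1) ^ 2) (e + Real.pi ^ 2 / 24) :=
    HasSum.even_add_odd he aux_odd
  have h := htot.unique aux_zeta
  have h4 : e = Real.pi ^ 2 / 8 := by linarith
  rwa [h4] at he

lemma aux_alt_sum : HasSum (fun n : ℕ => (-1 : ℝ) ^ n / ((n : ℝ) + 1) ^ 2) (Real.pi ^ 2 / 12) := by
  obtain ⟨f, hf⟩ : ∃ f : ℕ → ℝ, f = fun n : ℕ => (-1 : ℝ) ^ n / ((n : ℝ) + 1) ^ 2 := ⟨_, rfl⟩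
  rw [← hf]
  have h1 : HasSum (fun n : ℕ => f (2 * n)) (Real.pi ^ 2 / 8) := by
    refine (aux_hasSum_congr fun n => ?_).1 aux_even
    simp [hf, pow_mul]
  have h2 : HasSum (fun n : ℕ => f (2 * n + 1)) (-(Real.pi ^ 2 / 24)) := by
    refine (aux_hasSum_congr fun n => ?_).1 aux_odd.neg
    simp [hf, pow_mul, pow_succ, neg_div]
  have h3 := HasSum.even_add_odd h1 h2
  rwa [show Real.pi ^ 2 / 8 + -(Real.pi ^ 2 / 24) = Real.pi ^ 2 / 12 by ring] at h3

lemma auxF_int : IntegrableOn auxF (Ioi 0) := by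
  refine Integrable.mono' (integrableOn_exp_neg_Ioi 0) auxF_cont.aestronglyMeasurable ?_
  refine ae_of_all _ fun x => ?_
  rw [Real.norm_of_nonneg (auxF_nonneg x)]
  exact auxF_le x

lemma auxF_integral : ∫ x in Ioi (0 : ℝ), auxF x = Real.pi ^ 2 / 12 := by
  have hI : ∀ n : ℕ, ∫ x in Ioi (0 : ℝ), Real.exp (-((n : ℝ) + 1) * x) = 1 / ((n : ℝ) + 1) := by
    intro n
    rw [integral_exp_mul_Ioi (by linarith [n.cast_nonneg (α := ℝ)])]
    rw [mul_zero, Real.exp_zero, neg_div_neg_eq]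
  have hint : ∀ n : ℕ, IntegrableOn (fun x => Real.exp (-((n : ℝ) + 1) * x)) (Ioi 0) := by
    intro n
    exact integrableOn_exp_mul_Ioi (by linarith [n.cast_nonneg (α := ℝ)]) 0
  have key := hasSum_integral_of_summable_integral_norm (μ := volume.restrict (Ioi (0 : ℝ)))
    (F := fun (n : ℕ) x => (-1 : ℝ) ^ n / ((n : ℝ) + 1) * Real.exp (-((n : ℝ) + 1) * x))
    (fun n => (hint n).const_mul _) (by
      have : ∀ n : ℕ, (∫ x in Ioi (0 : ℝ),
          ‖(-1 : ℝ) ^ n / ((n : ℝ) + 1) * Real.exp (-((n : ℝ) + 1) * x)‖)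
            = 1 / ((n : ℝ) + 1) ^ 2 := by
        intro n
        have hn : (0 : ℝ) < (n : ℝ) + 1 := by positivity
        simp only [norm_mul, norm_div, norm_pow, norm_neg, norm_one, one_pow,
          Real.norm_of_nonneg hn.le, Real.norm_of_nonneg (Real.exp_pos _).le]
        rw [integral_const_mul, hI]
        field_simp
      simp only [this]
      have := (summable_nat_add_iff 1).2 hasSum_zeta_two.summable
      simpa using this)
  have h1 : ∀ n : ℕ, (∫ x in Ioi (0 : ℝ),
      (-1 : ℝ) ^ n / ((n : ℝ) + 1) * Real.exp (-((n : ℝ) + 1) * x))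
        = (-1 : ℝ) ^ n / ((n : ℝ) + 1) ^ 2 := by
    intro n
    have hn : (0 : ℝ) < (n : ℝ) + 1 := by positivity
    rw [integral_const_mul, hI]
    field_simp
  simp only [h1] at key
  rw [← key.unique aux_alt_sum]
  apply setIntegral_congr_fun measurableSet_Ioi
  intro x hx
  have hx : 0 < x := hx
  have hlt : |(-Real.exp (-x))| < 1 := by
    rw [abs_neg, abs_of_pos (Real.exp_pos _)]
    rw [← Real.exp_zero]; exact Real.exp_lt_exp.2 (by linarith)
  have := (Real.hasSum_pow_div_log_of_abs_lt_one hlt).neg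
  simp only [auxF]
  rw [neg_neg, sub_neg_eq_add] at this
  rw [← this.tsum_eq]
  apply tsum_congr
  intro n
  rw [neg_pow, ← Real.exp_nat_mul, pow_succ]
  push_cast
  rw [show ((n : ℝ) + 1) * -x = -((n : ℝ) + 1) * x by ring]
  ring

lemma aux_main {κ : ℝ} (hκ : 0 < κ) (z : ℝ) :
    |κ * Real.log (qPochInfR (-Real.exp (-(κ * z))) (Real.exp (-κ)))
      - (Real.pi ^ 2 / 12 - auxP (κ * z)) - κ * auxF (κ * z) / 2| ≤ κ ^ 2 := by
  have hterm : ∀ k : ℕ, 1 - -Real.exp (-(κ * z)) * Real.exp (-κ) ^ k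
      = 1 + Real.exp (-(κ * z + k * κ)) := by
    intro k
    rw [← Real.exp_nat_mul, neg_mul, sub_neg_eq_add, ← Real.exp_add]
    congr 2
    ring
  have hsum : Summable (fun k : ℕ => auxF (κ * z + k * κ)) := by
    refine Summable.of_nonneg_of_le (fun k => auxF_nonneg _) (fun k => auxF_le _) ?_
    have := (summable_geometric_of_lt_one (Real.exp_pos (-κ)).le
      (by rw [← Real.exp_zero]; exact Real.exp_lt_exp.2 (by linarith))).mul_left (Real.exp (-(κ * z)))
    refine (summable_congr fun k => ?_).1 this
    rw [← Real.exp_nat_mul, ← Real.exp_add]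
    congr 1
    ring
  have hlog : Real.log (qPochInfR (-Real.exp (-(κ * z))) (Real.exp (-κ)))
      = ∑' k : ℕ, auxF (κ * z + k * κ) := by
    unfold qPochInfR
    simp only [hterm]
    rw [← Real.rexp_tsum_eq_tprod (fun k => by positivity) hsum, Real.log_exp]
    rfl
  rw [hlog]
  have ht : Tendsto (fun N : ℕ => κ * z + N * κ) atTop atTop :=
    tendsto_atTop_add_const_left _ _ (tendsto_natCast_atTop_atTop.atTop_mul_const hκ)
  have hP : Tendsto (fun N : ℕ => auxP (κ * z + N * κ)) atTop (𝓝 (Real.pi ^ 2 / 12)) := by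
    have := intervalIntegral_tendsto_integral_Ioi 0 auxF_int ht
    rwa [auxF_integral] at this
  have hF : Tendsto (fun N : ℕ => auxF (κ * z + N * κ)) atTop (𝓝 0) := hsum.tendsto_atTop_zero
  have hS := hsum.hasSum.tendsto_sum_nat
  have hlim := (((hS.const_mul κ).sub (hP.sub_const (auxP (κ * z)))).sub
    (((hF.const_sub (auxF (κ * z))).const_mul κ).div_const 2)).abs
  rw [sub_zero] at hlim
  refine le_of_tendsto' hlim fun N => (aux_sum hκ.le N).trans ?_
  have h1 := auxG_le_one (κ * z)
  have h2 := auxG_pos (κ * z + N * κ)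
  nlinarith [sq_nonneg κ]

theorem statement16 (b ε : ℝ) (hb : b ∈ Set.Ioo (0 : ℝ) 1)
    (hε : ε ∈ Set.Ioo (0 : ℝ) (1 / 2)) :
    ∃ C > (0 : ℝ), ∃ κ₀ > (0 : ℝ), ∀ κ : ℝ, 0 < κ → κ < κ₀ → ∀ z : ℝ,
      |Real.log (qPochInfR (-Real.exp (-(κ * z))) (Real.exp (-κ))) -
        Real.pi ^ 2 / (12 * κ) + (z - 1 / 2) * Real.log 2| ≤
      C * (κ * (1 + |z|) ^ (2 : ℕ) + κ ^ b * (1 + |z|) ^ (1 + 2 * b + ε)) := by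
  refine ⟨1, one_pos, 1, one_pos, fun κ hκ _ z => ?_⟩
  have h1 := aux_main hκ z
  have h2 := auxF_lip (κ * z)
  have h3 := auxP_lip (κ * z)
  set L := Real.log (qPochInfR (-Real.exp (-(κ * z))) (Real.exp (-κ))) with hL
  have hnn : 0 ≤ κ ^ b * (1 + |z|) ^ (1 + 2 * b + ε) := by positivity
  suffices h : |L - Real.pi ^ 2 / (12 * κ) + (z - 1 / 2) * Real.log 2| ≤ κ * (1 + |z|) ^ 2 by
    linarith
  have e : κ * (L - Real.pi ^ 2 / (12 * κ) + (z - 1 / 2) * Real.log 2)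
      = (κ * L - (Real.pi ^ 2 / 12 - auxP (κ * z)) - κ * auxF (κ * z) / 2)
        - (auxP (κ * z) - κ * z * Real.log 2) + κ / 2 * (auxF (κ * z) - Real.log 2) := by
    field_simp
    ring
  have h4 : |κ * (L - Real.pi ^ 2 / (12 * κ) + (z - 1 / 2) * Real.log 2)|
      ≤ κ ^ 2 + (κ * z) ^ 2 + κ / 2 * |κ * z| := by
    rw [e]
    refine (abs_add_le _ _).trans (add_le_add ((abs_sub _ _).trans (add_le_add h1 h3)) ?_)
    rw [abs_mul, abs_of_pos (by positivity : (0 : ℝ) < κ / 2)]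
    gcongr
  rw [abs_mul, abs_mul, abs_of_pos hκ, mul_pow, ← sq_abs z] at h4
  refine le_of_mul_le_mul_left (h4.trans ?_) hκ
  have : 0 ≤ κ ^ 2 * |z| := by positivity
  nlinarith
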